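/- arXiv:1812.08986 — 2 statements merged into one kernel-verified Lean document; each statement's English description precedes it below -/
import Mathlib

section
/- Let W ⊂ ℝ^d be a bounded measurable set and r ≥ 0 be such that |W ∩ (y + W)| > 0 for all y with ‖y‖ ≤ r, let g₀ : ℝ^d × [0,π] → [0,∞] be measurable, let e ∈ S^k and s ∈ [0,π]. Then (1/σ_k) ∬_{(W×S^k)×(W×S^k)} 1{‖y₁−y₂‖ ≤ r, d(u₁,u₂) ≤ s} g₀(y₁−y₂, d(u₁,u₂)) / |W ∩ ((y₁−y₂) + W)| dμ(y₁,u₁) dμ(y₂,u₂) = K_e(r,s). (This is the unbiasedness of the translation-corrected estimator of the space-sphere K-function, in deterministic Campbell form.) -/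
open MeasureTheory Real Set
open scoped ENNReal NNReal RealInnerProductSpace Classical

noncomputable section

/-- `d`-dimensional Euclidean space. -/
abbrev Eucl (d : ℕ) : Type := EuclideanSpace ℝ (Fin d)

/-- The unit `k`-sphere in `ℝ^{k+1}`. -/
abbrev Sph (k : ℕ) : Type := Metric.sphere (0 : EuclideanSpace ℝ (Fin (k+1))) 1

/-- The surface measure `ν` on the `k`-sphere: the `k`-dimensional Hausdorff measure. -/
noncomputable def sphMeasure (k : ℕ) : Measure (Sph k) := μH[k]

/-- The geodesic distance `d(u,v) = arccos ⟨u,v⟩` on the `k`-sphere. -/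
noncomputable def gd {k : ℕ} (u v : Sph k) : ℝ :=
  Real.arccos ⟪(u : EuclideanSpace ℝ (Fin (k+1))), (v : EuclideanSpace ℝ (Fin (k+1)))⟫

/-- The space-sphere K-function with reference direction `e`. -/
noncomputable def ssK {d k : ℕ} (g₀ : Eucl d → ℝ → ℝ≥0∞) (e : Sph k) (r s : ℝ) : ℝ≥0∞ :=
  ∫⁻ y in {y : Eucl d | ‖y‖ ≤ r}, ∫⁻ u in {u : Sph k | gd u e ≤ s}, g₀ y (gd u e) ∂(sphMeasure k)

/-!
Substituting `y = y₁ - y₂` turns a double integral over `W × W` of a function of `y₁ - y₂` into a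
single integral in `y` weighted by `|W ∩ (y + W)|`, which is precisely the factor that the
translation correction divides out. On the sphere, the reflection exchanging two points preserves
Hausdorff measure and inner products, so the law of `d(u, ·)` under `ν` does not depend on `u`;
the integral over `u` then contributes the factor `σ_k`. It can be cancelled because `σ_k` is
finite (inverse stereographic projection is locally Lipschitz) and nonzero (orthogonal projection
onto a hyperplane is `1`-Lipschitz and maps the sphere onto a set containing a ball).
-/

open scoped Topology

section SetCovariogram

variable {G : Type*} [AddGroup G] [MeasurableSpace G] {μ : Measure G} {W : Set G}

/-- The set covariogram `y ↦ μ (W ∩ (y + W))` of `W`: the weight by which the translation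
correction divides. The translate is written as an image, as in the estimator. -/
def setCovariogram (μ : Measure G) (W : Set G) (y : G) : ℝ≥0∞ :=
  μ (W ∩ (fun z => y + z) '' W)

lemma setCovariogram_ne_top (hW : μ W ≠ ∞) (y : G) : setCovariogram μ W y ≠ ∞ :=
  measure_ne_top_of_subset inter_subset_left hW

variable [MeasurableAdd₂ G] [MeasurableNeg G]

lemma measurableSet_inter_translate (hW : MeasurableSet W) :
    MeasurableSet {p : G × G | p.2 ∈ W ∩ (fun z => p.1 + z) '' W} := by
  simp only [image_add_left]
  exact (measurable_snd hW).inter ((measurable_fst.neg.add measurable_snd) hW)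

variable [SFinite μ]

lemma measurable_setCovariogram (hW : MeasurableSet W) : Measurable (setCovariogram μ W) :=
  measurable_measure_prodMk_left (measurableSet_inter_translate hW)

variable [μ.IsAddLeftInvariant] [μ.IsNegInvariant]

lemma setLIntegral_setLIntegral_sub (hW : MeasurableSet W) {f : G → ℝ≥0∞} (hf : Measurable f) :
    ∫⁻ x in W, ∫⁻ z in W, f (x - z) ∂μ ∂μ = ∫⁻ y, f y * setCovariogram μ W y ∂μ := by
  have hS := measurableSet_inter_translate hW
  have substitution (x : G) : W.indicator (fun x => ∫⁻ z in W, f (x - z) ∂μ) x =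
      ∫⁻ y, (W ∩ (fun z => y + z) '' W).indicator (fun _ => f y) x ∂μ := by
    by_cases hx : x ∈ W
    · rw [indicator_of_mem hx, ← lintegral_indicator hW,
        ← lintegral_sub_left_eq_self (μ := μ)
          (fun y => (W ∩ (fun z => y + z) '' W).indicator (fun _ => f y) x) x]
      simp [indicator, hx]
    · simp [hx]
  calc ∫⁻ x in W, ∫⁻ z in W, f (x - z) ∂μ ∂μ
      = ∫⁻ x, ∫⁻ y, (W ∩ (fun z => y + z) '' W).indicator (fun _ => f y) x ∂μ ∂μ := by
        rw [← lintegral_indicator hW, lintegral_congr substitution]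
    _ = ∫⁻ y, ∫⁻ x, (W ∩ (fun z => y + z) '' W).indicator (fun _ => f y) x ∂μ ∂μ :=
        lintegral_lintegral_swap
          (((hf.comp measurable_fst).indicator hS).comp measurable_swap).aemeasurable
    _ = ∫⁻ y, f y * setCovariogram μ W y ∂μ :=
        lintegral_congr fun y => lintegral_indicator_const (measurable_prodMk_left hS) (f y)

lemma setLIntegral_setLIntegral_sub_div_setCovariogram (hW : MeasurableSet W) (hWfin : μ W ≠ ∞)
    {B : Set G} (hB : MeasurableSet B) (hpos : ∀ y ∈ B, 0 < setCovariogram μ W y)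
    {f : G → ℝ≥0∞} (hf : Measurable f) :
    ∫⁻ x in W, ∫⁻ z in W, B.indicator f (x - z) / setCovariogram μ W (x - z) ∂μ ∂μ =
      ∫⁻ y in B, f y ∂μ := by
  have hquot : Measurable fun y => B.indicator f y / setCovariogram μ W y :=
    (hf.indicator hB).div (measurable_setCovariogram hW)
  rw [setLIntegral_setLIntegral_sub hW hquot, ← lintegral_indicator hB]
  refine lintegral_congr fun y => ?_
  by_cases hy : y ∈ B
  · exact ENNReal.div_mul_cancel (hpos y hy).ne' (setCovariogram_ne_top hWfin y)
  · simp [hy]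

end SetCovariogram

lemma lintegral_prod_lintegral_prod_of_map_eq {X S T : Type*} [MeasurableSpace X]
    [MeasurableSpace S] [MeasurableSpace T] {ρ : Measure X} [SFinite ρ] {ν : Measure S} [SFinite ν]
    {δ : S → S → T} (hδ : Measurable (Function.uncurry δ))
    {e : S} (hiso : ∀ u, ν.map (δ u) = ν.map (δ e))
    {F : X → X → T → ℝ≥0∞} (hF : Measurable fun q : (X × X) × T => F q.1.1 q.1.2 q.2) :
    ∫⁻ p₁, ∫⁻ p₂, F p₁.1 p₂.1 (δ p₁.2 p₂.2) ∂(ρ.prod ν) ∂(ρ.prod ν) =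
      (∫⁻ x₁, ∫⁻ x₂, ∫⁻ t, F x₁ x₂ t ∂(ν.map (δ e)) ∂ρ ∂ρ) * ν univ := by
  set τ := ν.map (δ e)
  have inner_integral (p₁ : X × S) :
      ∫⁻ p₂, F p₁.1 p₂.1 (δ p₁.2 p₂.2) ∂(ρ.prod ν) = ∫⁻ x₂, ∫⁻ t, F p₁.1 x₂ t ∂τ ∂ρ := by
    have hδ₁ : Measurable (δ p₁.2) := hδ.comp measurable_prodMk_left
    rw [lintegral_prod]
    · refine lintegral_congr fun x₂ => ?_
      have hF₂ : Measurable (F p₁.1 x₂) := hF.comp (measurable_prodMk_left (x := (p₁.1, x₂)))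
      rw [← hiso p₁.2, lintegral_map hF₂ hδ₁]
    · exact (hF.comp (by fun_prop :
        Measurable fun p₂ : X × S => ((p₁.1, p₂.1), δ p₁.2 p₂.2))).aemeasurable
  have hmeas : Measurable fun x₁ => ∫⁻ x₂, ∫⁻ t, F x₁ x₂ t ∂τ ∂ρ :=
    hF.lintegral_prod_right'.lintegral_prod_right'
  calc ∫⁻ p₁, ∫⁻ p₂, F p₁.1 p₂.1 (δ p₁.2 p₂.2) ∂(ρ.prod ν) ∂(ρ.prod ν)
      = ∫⁻ p₁, (∫⁻ x₂, ∫⁻ t, F p₁.1 x₂ t ∂τ ∂ρ) * 1 ∂(ρ.prod ν) := by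
        simp only [inner_integral, mul_one]
    _ = (∫⁻ x₁, ∫⁻ x₂, ∫⁻ t, F x₁ x₂ t ∂τ ∂ρ ∂ρ) * ν univ := by
        rw [lintegral_prod_mul hmeas.aemeasurable aemeasurable_const, lintegral_one]

lemma finiteAtFilter_map_hausdorffMeasure {X Y : Type*} [EMetricSpace X] [MeasurableSpace X]
    [BorelSpace X] [EMetricSpace Y] [MeasurableSpace Y] [BorelSpace Y] {f : X → Y}
    (hf : LocallyLipschitz f) {s : ℝ} (hs : 0 ≤ s) {x : X}
    (hx : (μH[s] : Measure X).FiniteAtFilter (𝓝 x)) :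
    (μH[s] : Measure Y).FiniteAtFilter (Filter.map f (𝓝 x)) := by
  obtain ⟨A, hA, hAfin⟩ := hx
  obtain ⟨K, U, hU, hK⟩ := hf x
  refine ⟨f '' (A ∩ U), Filter.image_mem_map (Filter.inter_mem hA hU), ?_⟩
  calc μH[s] (f '' (A ∩ U))
      ≤ (K : ℝ≥0∞) ^ s * μH[s] (A ∩ U) :=
        (hK.mono inter_subset_right).hausdorffMeasure_image_le hs
    _ < ∞ := ENNReal.mul_lt_top (ENNReal.rpow_lt_top_of_nonneg hs ENNReal.coe_ne_top)
        ((measure_mono inter_subset_left).trans_lt hAfin)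

section Sphere

variable {E : Type*} [NormedAddCommGroup E] [InnerProductSpace ℝ E]

lemma locallyLipschitz_stereoInvFun {v : E} (hv : ‖v‖ = 1) :
    LocallyLipschitz (stereoInvFun hv) := by
  have hsmooth : ContDiff ℝ 1 (stereoInvFunAux v ∘ ((↑) : (ℝ ∙ v)ᗮ → E)) :=
    contDiff_stereoInvFunAux.comp (ℝ ∙ v)ᗮ.subtypeL.contDiff
  exact hsmooth.locallyLipschitz

lemma ball_subset_range_orthogonalProjectionOnto_sphere {v : E} (hv : ‖v‖ = 1) :
    Metric.ball (0 : (ℝ ∙ v)ᗮ) 1 ⊆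
      range fun u : Metric.sphere (0 : E) 1 => (ℝ ∙ v)ᗮ.orthogonalProjectionOnto (u : E) := by
  intro w hw
  have hnonneg : 0 ≤ 1 - ‖w‖ ^ 2 := by
    nlinarith [norm_nonneg w, mem_ball_zero_iff.mp hw]
  have horth : ⟪(w : E), v⟫ = 0 := Submodule.mem_orthogonal_singleton_iff_inner_left.mp w.2
  have hnorm : ‖(w : E) + √(1 - ‖w‖ ^ 2) • v‖ ^ 2 = 1 := by
    rw [norm_add_sq_real, inner_smul_right, horth, norm_smul, hv, Real.norm_eq_abs, mul_one,
      sq_abs, Real.sq_sqrt hnonneg, Submodule.coe_norm]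
    ring
  refine ⟨⟨(w : E) + √(1 - ‖w‖ ^ 2) • v, mem_sphere_zero_iff_norm.mpr <|
    (pow_eq_one_iff_of_nonneg (norm_nonneg _) two_ne_zero).mp hnorm⟩, ?_⟩
  simp [Submodule.orthogonalProjectionOnto_orthogonalComplement_singleton_eq_zero]

variable [MeasurableSpace E] [BorelSpace E]

lemma isAddHaarMeasure_hausdorffMeasure_orthogonal_span_singleton {n : ℕ}
    [Fact (Module.finrank ℝ E = n + 1)] {v : E} (hv : v ≠ 0) :
    (μH[n] : Measure (ℝ ∙ v)ᗮ).IsAddHaarMeasure := by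
  have : FiniteDimensional ℝ E := .of_fact_finrank_eq_succ n
  have hfinrank : Module.finrank ℝ (ℝ ∙ v)ᗮ = n :=
    Submodule.finrank_orthogonal_span_singleton hv
  simpa only [hfinrank] using isAddHaarMeasure_hausdorffMeasure (E := (ℝ ∙ v)ᗮ)

instance isFiniteMeasure_hausdorffMeasure_sphere {n : ℕ} [Fact (Module.finrank ℝ E = n + 1)] :
    IsFiniteMeasure (μH[n] : Measure (Metric.sphere (0 : E) 1)) := by
  have : FiniteDimensional ℝ E := .of_fact_finrank_eq_succ n
  have : IsLocallyFiniteMeasure (μH[n] : Measure (Metric.sphere (0 : E) 1)) := by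
    refine ⟨fun u => ?_⟩
    have hv : ‖((-u : Metric.sphere (0 : E) 1) : E)‖ = 1 := norm_eq_of_mem_sphere (-u)
    have := isAddHaarMeasure_hausdorffMeasure_orthogonal_span_singleton (n := n)
      (ne_zero_of_mem_unit_sphere (-u))
    have hfin := finiteAtFilter_map_hausdorffMeasure (locallyLipschitz_stereoInvFun hv)
      n.cast_nonneg (Measure.finiteAt_nhds μH[n] (stereographic hv u))
    have hu : (stereographic hv).symm (stereographic hv u) = u :=
      (stereographic hv).left_inv <| by
        rw [stereographic_source]
        exact ne_neg_of_mem_unit_sphere ℝ u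
    have hmap := (isOpenEmbedding_stereographic_symm hv).map_nhds_eq (stereographic hv u)
    rw [hu] at hmap
    exact hmap ▸ hfin
  infer_instance

instance neZero_hausdorffMeasure_sphere {n : ℕ} [hn : Fact (Module.finrank ℝ E = n + 1)] :
    NeZero (μH[n] : Measure (Metric.sphere (0 : E) 1)) := by
  have : Nontrivial E := Module.nontrivial_of_finrank_eq_succ hn.out
  obtain ⟨v, hv⟩ := exists_norm_eq E zero_le_one
  have := isAddHaarMeasure_hausdorffMeasure_orthogonal_span_singleton (n := n)
    (norm_ne_zero_iff.mp (hv.trans_ne one_ne_zero))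
  have hlip : LipschitzWith 1 fun u : Metric.sphere (0 : E) 1 =>
      (ℝ ∙ v)ᗮ.orthogonalProjectionOnto (u : E) := by
    have := (ℝ ∙ v)ᗮ.lipschitzWith_orthogonalProjectionOnto.comp
      (LipschitzWith.subtype_val (Metric.sphere (0 : E) 1))
    rwa [mul_one] at this
  have hpos : 0 < (μH[n] : Measure (Metric.sphere (0 : E) 1)) univ :=
    calc 0 < μH[n] (Metric.ball (0 : (ℝ ∙ v)ᗮ) 1) := Metric.measure_ball_pos _ _ one_pos
      _ ≤ μH[n] (_ '' univ) :=
        measure_mono (image_univ ▸ ball_subset_range_orthogonalProjectionOnto_sphere hv)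
      _ ≤ μH[n] univ := by
        simpa using hlip.hausdorffMeasure_image_le n.cast_nonneg univ
  exact ⟨Measure.measure_univ_ne_zero.mp hpos.ne'⟩

/-- The isometry of a centred sphere induced by a linear isometry; rotation invariance of the
Hausdorff measure is expressed through it. -/
def sphereIsometryEquiv (L : E ≃ₗᵢ[ℝ] E) (r : ℝ) :
    Metric.sphere (0 : E) r ≃ᵢ Metric.sphere (0 : E) r where
  toEquiv := L.toEquiv.subtypeEquiv fun x => by simp
  isometry_toFun := fun x y => L.isometry x y

lemma map_inner_hausdorffMeasure_sphere {r : ℝ} (s : ℝ) (u v : Metric.sphere (0 : E) r) :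
    (μH[s] : Measure (Metric.sphere (0 : E) r)).map (fun w => ⟪u.1, w.1⟫) =
      (μH[s] : Measure (Metric.sphere (0 : E) r)).map (fun w => ⟪v.1, w.1⟫) := by
  let R : E ≃ₗᵢ[ℝ] E := (ℝ ∙ ((v : E) - u))ᗮ.reflection
  have hR : R v = u := Submodule.reflection_sub (by simp)
  let ρ := sphereIsometryEquiv R r
  have hinner (w : Metric.sphere (0 : E) r) : ⟪(u : E), ρ w⟫ = ⟪(v : E), w⟫ := by
    rw [← hR]
    exact R.inner_map_map v w
  have hρ : MeasurePreserving ρ μH[s] μH[s] := ρ.measurePreserving_hausdorffMeasure s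
  have hmeas : Measurable fun w : Metric.sphere (0 : E) r => ⟪(u : E), w⟫ :=
    Continuous.measurable (by fun_prop)
  nth_rewrite 1 [← hρ.map_eq]
  rw [Measure.map_map hmeas hρ.measurable]
  exact congrArg (Measure.map · μH[s]) (funext hinner)

end Sphere

section GeodesicDistance

variable {k : ℕ}

instance fact_finrank_euclideanSpace_fin_succ :
    Fact (Module.finrank ℝ (EuclideanSpace ℝ (Fin (k + 1))) = k + 1) :=
  ⟨finrank_euclideanSpace_fin⟩

instance isFiniteMeasure_sphMeasure : IsFiniteMeasure (sphMeasure k) :=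
  isFiniteMeasure_hausdorffMeasure_sphere

instance neZero_sphMeasure : NeZero (sphMeasure k) :=
  neZero_hausdorffMeasure_sphere

lemma gd_comm (u v : Sph k) : gd u v = gd v u := by
  rw [gd, gd, real_inner_comm]

lemma measurable_gd : Measurable (Function.uncurry (gd (k := k))) :=
  Continuous.measurable (by unfold gd; fun_prop)

lemma map_gd_sphMeasure (u v : Sph k) :
    (sphMeasure k).map (gd u) = (sphMeasure k).map (gd v) := by
  have hgd (w : Sph k) : (sphMeasure k).map (gd w) =
      ((sphMeasure k).map fun x => ⟪w.1, x.1⟫).map arccos :=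
    (Measure.map_map measurable_arccos (Continuous.measurable (by fun_prop))).symm
  rw [hgd u, hgd v, sphMeasure, map_inner_hausdorffMeasure_sphere]

end GeodesicDistance

theorem ssK_translation_estimator_unbiased_general
    {G S T : Type*} [AddGroup G] [MeasurableSpace G] [MeasurableAdd₂ G] [MeasurableNeg G]
    [MeasurableSpace S] [MeasurableSpace T]
    {μ : Measure G} [SFinite μ] [μ.IsAddLeftInvariant] [μ.IsNegInvariant]
    {ν : Measure S} [IsFiniteMeasure ν] [NeZero ν]
    {δ : S → S → T} (hδ : Measurable (Function.uncurry δ))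
    {e : S} (hiso : ∀ u, ν.map (δ u) = ν.map (δ e))
    {W : Set G} (hW : MeasurableSet W) (hWfin : μ W ≠ ∞)
    {B : Set G} (hB : MeasurableSet B) (hpos : ∀ y ∈ B, 0 < setCovariogram μ W y)
    {C : Set T} (hC : MeasurableSet C)
    {g : G → T → ℝ≥0∞} (hg : Measurable (Function.uncurry g)) :
    (∫⁻ p₁, (∫⁻ p₂,
        (if p₁.1 - p₂.1 ∈ B ∧ δ p₁.2 p₂.2 ∈ C then
          g (p₁.1 - p₂.1) (δ p₁.2 p₂.2) / setCovariogram μ W (p₁.1 - p₂.1) else 0)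
        ∂((μ.restrict W).prod ν)) ∂((μ.restrict W).prod ν)) / ν univ =
      ∫⁻ y in B, ∫⁻ u in {u | δ e u ∈ C}, g y (δ e u) ∂ν ∂μ := by
  set τ := ν.map (δ e)
  have hδe : Measurable (δ e) := hδ.comp measurable_prodMk_left
  let V := setCovariogram μ W
  have hV : Measurable V := measurable_setCovariogram hW
  let f : G → T → ℝ≥0∞ := fun y t => if y ∈ B ∧ t ∈ C then g y t / V y else 0
  have hf : Measurable (Function.uncurry f) :=
    Measurable.ite (hB.prod hC) (hg.div (hV.comp measurable_fst)) measurable_const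
  have hgC : Measurable fun y => ∫⁻ t in C, g y t ∂τ := hg.lintegral_prod_right'
  have integrate_marks (y : G) :
      ∫⁻ t, f y t ∂τ = B.indicator (fun y => ∫⁻ t in C, g y t ∂τ) y / V y := by
    by_cases hy : y ∈ B
    · have hfy : f y = C.indicator fun t => g y t * (V y)⁻¹ := by
        ext t
        simp [f, hy, indicator, div_eq_mul_inv]
      rw [hfy, lintegral_indicator hC, lintegral_mul_const _ hg.of_uncurry_left,
        indicator_of_mem hy, div_eq_mul_inv]
    · simp [f, hy]
  have hfsub : Measurable fun q : (G × G) × T => f (q.1.1 - q.1.2) q.2 :=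
    hf.comp (by fun_prop : Measurable fun q : (G × G) × T => (q.1.1 - q.1.2, q.2))
  calc _ = (∫⁻ x in W, ∫⁻ z in W, ∫⁻ t, f (x - z) t ∂τ ∂μ ∂μ) * ν univ / ν univ :=
        congrArg (· / ν univ) <| lintegral_prod_lintegral_prod_of_map_eq hδ hiso
          (F := fun x z => f (x - z)) hfsub
    _ = ∫⁻ x in W, ∫⁻ z in W, ∫⁻ t, f (x - z) t ∂τ ∂μ ∂μ :=
        ENNReal.mul_div_cancel_right (NeZero.ne _) (measure_ne_top ν univ)
    _ = ∫⁻ y in B, ∫⁻ t in C, g y t ∂τ ∂μ := by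
        simp only [integrate_marks]
        exact setLIntegral_setLIntegral_sub_div_setCovariogram hW hWfin hB hpos hgC
    _ = ∫⁻ y in B, ∫⁻ u in {u | δ e u ∈ C}, g y (δ e u) ∂ν ∂μ :=
        lintegral_congr fun y => setLIntegral_map hC hg.of_uncurry_left hδe

/-- Unbiasedness of the translation-corrected estimator of the space-sphere K-function,
in deterministic Campbell form. -/
theorem ssK_translation_estimator_unbiased (d k : ℕ) (hd : 1 ≤ d) (hk : 1 ≤ k)
    (W : Set (Eucl d)) (hWm : MeasurableSet W) (hWb : Bornology.IsBounded W)
    (r : ℝ) (hr : 0 ≤ r)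
    (hpos : ∀ y : Eucl d, ‖y‖ ≤ r → 0 < volume (W ∩ ((fun z => y + z) '' W)))
    (g₀ : Eucl d → ℝ → ℝ≥0∞) (hg₀ : Measurable (Function.uncurry g₀))
    (e : Sph k) (s : ℝ) (hs₀ : 0 ≤ s) (hsπ : s ≤ π) :
    (∫⁻ p₁, (∫⁻ p₂,
        (if ‖p₁.1 - p₂.1‖ ≤ r ∧ gd p₁.2 p₂.2 ≤ s then
          g₀ (p₁.1 - p₂.1) (gd p₁.2 p₂.2)
            / volume (W ∩ ((fun z => (p₁.1 - p₂.1) + z) '' W)) else 0)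
        ∂(((volume : Measure (Eucl d)).restrict W).prod (sphMeasure k)))
      ∂(((volume : Measure (Eucl d)).restrict W).prod (sphMeasure k)))
      / sphMeasure k Set.univ = ssK g₀ e r s := by
  simpa only [ssK, setCovariogram, mem_ofPred_eq, mem_Iic, gd_comm e] using
    ssK_translation_estimator_unbiased_general (μ := (volume : Measure (Eucl d)))
      measurable_gd (map_gd_sphMeasure · e) hWm hWb.measure_lt_top.ne
      (measurableSet_le measurable_norm measurable_const) hpos (measurableSet_Iic (a := s)) hg₀
end
end

section
/- Assume ρ is first order separable, i.e. ρ(y,u)·E(N) = ρ₁(y)ρ₂(u) for all (y,u), and assume there is a measurable g₀ : ℝ^d × [0,π] → [0,∞) such that g(y₁,u₁,y₂,u₂) = g₀(y₁−y₂, d(u₁,u₂)) whenever ρ(y₁,u₁)ρ(y₂,u₂) > 0 (second order intensity-reweighted stationarity). Then for all u₁, u₂ ∈ S^k with ρ₂(u₁)ρ₂(u₂) > 0, g₂(u₁,u₂) = ∫_W ∫_W (ρ₁(y₁)/E(N)) (ρ₁(y₂)/E(N)) g₀(y₁−y₂, d(u₁,u₂)) dy₁ dy₂; in particular, on the set where ρ₂(u₁)ρ₂(u₂)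 > 0 the function g₂(u₁,u₂) depends on (u₁,u₂) only through the geodesic distance d(u₁,u₂). -/
open MeasureTheory Real Set
open scoped ENNReal NNReal RealInnerProductSpace Classical

noncomputable section

variable {d k : ℕ}

/-- The product measure `μ` on `ℝ^d × S^k` restricted to `W × S^k`. -/
noncomputable def muW (W : Set (Eucl d)) (k : ℕ) : Measure (Eucl d × Sph k) :=
  ((volume : Measure (Eucl d)).restrict W).prod (sphMeasure k)

/-- Marginal spatial intensity `ρ₁(y) = ∫_{S^k} ρ(y,u) dν(u)`. -/
noncomputable def rho1 (ρ : Eucl d × Sph k → ℝ≥0) (y : Eucl d) : ℝ≥0∞ :=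
  ∫⁻ u, (ρ (y, u) : ℝ≥0∞) ∂(sphMeasure k)

/-- Marginal spherical intensity `ρ₂(u) = ∫_W ρ(y,u) dy`. -/
noncomputable def rho2 (W : Set (Eucl d)) (ρ : Eucl d × Sph k → ℝ≥0) (u : Sph k) : ℝ≥0∞ :=
  ∫⁻ y in W, (ρ (y, u) : ℝ≥0∞)

/-- The expected number of points `E(N) = ∫_{W × S^k} ρ dμ`. -/
noncomputable def meanN (W : Set (Eucl d)) (ρ : Eucl d × Sph k → ℝ≥0) : ℝ≥0∞ :=
  ∫⁻ p, (ρ p : ℝ≥0∞) ∂(muW W k)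

/-- The pair correlation function `g₁` of the spatial components. -/
noncomputable def gfun1 (ρ : Eucl d × Sph k → ℝ≥0)
    (g : Eucl d × Sph k → Eucl d × Sph k → ℝ≥0) (y₁ y₂ : Eucl d) : ℝ≥0∞ :=
  if 0 < rho1 ρ y₁ * rho1 ρ y₂ then
    (∫⁻ u₁, (∫⁻ u₂, ((ρ (y₁, u₁) : ℝ≥0∞) * (ρ (y₂, u₂) : ℝ≥0∞) *
        (g (y₁, u₁) (y₂, u₂) : ℝ≥0∞)) ∂(sphMeasure k)) ∂(sphMeasure k))
      / (rho1 ρ y₁ * rho1 ρ y₂)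
  else 0

/-- The pair correlation function `g₂` of the spherical components. -/
noncomputable def gfun2 (W : Set (Eucl d)) (ρ : Eucl d × Sph k → ℝ≥0)
    (g : Eucl d × Sph k → Eucl d × Sph k → ℝ≥0) (u₁ u₂ : Sph k) : ℝ≥0∞ :=
  if 0 < rho2 W ρ u₁ * rho2 W ρ u₂ then
    (∫⁻ y₁ in W, ∫⁻ y₂ in W, ((ρ (y₁, u₁) : ℝ≥0∞) * (ρ (y₂, u₂) : ℝ≥0∞) *
        (g (y₁, u₁) (y₂, u₂) : ℝ≥0∞)))
      / (rho2 W ρ u₁ * rho2 W ρ u₂)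
  else 0

/-- The second factorial moment `E{N(N−1)}`. -/
noncomputable def momN2 (W : Set (Eucl d)) (ρ : Eucl d × Sph k → ℝ≥0)
    (g : Eucl d × Sph k → Eucl d × Sph k → ℝ≥0) : ℝ≥0∞ :=
  ∫⁻ p, (∫⁻ q, ((ρ p : ℝ≥0∞) * (ρ q : ℝ≥0∞) * (g p q : ℝ≥0∞)) ∂(muW W k)) ∂(muW W k)

/-- The constant `β = E(N)² / E{N(N−1)}`. -/
noncomputable def betaC (W : Set (Eucl d)) (ρ : Eucl d × Sph k → ℝ≥0)
    (g : Eucl d × Sph k → Eucl d × Sph k → ℝ≥0) : ℝ≥0∞ :=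
  (meanN W ρ) ^ 2 / momN2 W ρ g

/-!
Dividing the separability identity `ρ(y,u) E(N) = ρ₁(y) ρ₂(u)` by `ρ₂(u) E(N)` shows that the
conditional density `ρ(y,u) / ρ₂(u)` of the location given the mark `u` is `ρ₁(y) / E(N)`, whatever
`u` is. Pulling the denominator of `g₂` inside the double integral turns the two intensities into
two such densities, and where they do not vanish `g` may be replaced by its stationary form.
-/

section LintegralRatio

variable {α β : Type*} [MeasurableSpace α] [MeasurableSpace β] {μ : Measure α} {ν : Measure β}

lemma lintegral_ne_top_of_mul_eq_mul_lintegral {f h : α → ℝ≥0∞} {c : ℝ≥0∞}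
    (hf : ∀ x, f x ≠ ⊤) (hc₀ : c ≠ 0) (hc : c ≠ ⊤)
    (hfh : ∀ x, f x * c = h x * ∫⁻ z, f z ∂μ) : ∫⁻ z, f z ∂μ ≠ ⊤ := by
  intro htop
  have hf_zero (x : α) : f x = 0 := by
    have hh_zero : h x = 0 := by
      by_contra hne
      refine ENNReal.mul_ne_top (hf x) hc ?_
      rw [hfh x, htop, ENNReal.mul_top hne]
    have hfc_zero : f x * c = 0 := by rw [hfh x, hh_zero, zero_mul]
    exact (mul_eq_zero.mp hfc_zero).resolve_right hc₀
  simp [hf_zero] at htop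

lemma div_lintegral_eq_div_of_mul_eq_mul_lintegral {f h : α → ℝ≥0∞} {c : ℝ≥0∞}
    (hf : ∀ x, f x ≠ ⊤) (hc₀ : c ≠ 0) (hc : c ≠ ⊤)
    (hfh : ∀ x, f x * c = h x * ∫⁻ z, f z ∂μ) (hint : ∫⁻ z, f z ∂μ ≠ 0) (x : α) :
    f x / ∫⁻ z, f z ∂μ = h x / c := by
  have hfin := lintegral_ne_top_of_mul_eq_mul_lintegral hf hc₀ hc hfh
  rw [ENNReal.div_eq_div_iff hc₀ hc hint hfin, mul_comm c, hfh x, mul_comm]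

lemma lintegral_lintegral_mul_mul_div (f : α → ℝ≥0∞) (h : β → ℝ≥0∞) (κ : α → β → ℝ≥0∞)
    {a b : ℝ≥0∞} (ha : a ≠ 0) (hb : b ≠ 0) :
    (∫⁻ x, ∫⁻ y, f x * h y * κ x y ∂ν ∂μ) / (a * b) =
      ∫⁻ x, ∫⁻ y, f x / a * (h y / b) * κ x y ∂ν ∂μ := by
  have hinv : (a * b)⁻¹ ≠ ⊤ := ENNReal.inv_ne_top.mpr (mul_ne_zero ha hb)
  simp_rw [div_eq_mul_inv, ← lintegral_mul_const' _ _ hinv]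
  refine lintegral_congr fun x => lintegral_congr fun y => ?_
  rw [ENNReal.mul_inv (Or.inl ha) (Or.inr hb)]
  ring

end LintegralRatio

section MarkedIntensity

variable {Y U T : Type*} [MeasurableSpace Y]

/-- The intensity `∫ ρ(y,u) dμ(y)` of the marks of a point process on `Y × U` with locations in `Y`,
marks in `U` and intensity `ρ`; this is `rho2` on general spaces, the observation window being
absorbed into `μ`. -/
def markIntensity (μ : Measure Y) (ρ : Y × U → ℝ≥0) (u : U) : ℝ≥0∞ :=
  ∫⁻ y, (ρ (y, u) : ℝ≥0∞) ∂μ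

/-- The pair correlation function of the marks, set to zero where the mark intensity vanishes; this
is `gfun2` on general spaces. -/
def markPairCorrelation (μ : Measure Y) (ρ : Y × U → ℝ≥0) (g : Y × U → Y × U → ℝ≥0)
    (u₁ u₂ : U) : ℝ≥0∞ :=
  if 0 < markIntensity μ ρ u₁ * markIntensity μ ρ u₂ then
    (∫⁻ y₁, ∫⁻ y₂, (ρ (y₁, u₁) : ℝ≥0∞) * (ρ (y₂, u₂) : ℝ≥0∞) *
        (g (y₁, u₁) (y₂, u₂) : ℝ≥0∞) ∂μ ∂μ)
      / (markIntensity μ ρ u₁ * markIntensity μ ρ u₂)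
  else 0

variable {μ : Measure Y} {ρ : Y × U → ℝ≥0} {g : Y × U → Y × U → ℝ≥0}

lemma markPairCorrelation_eq_lintegral_div {u₁ u₂ : U} (hu₁ : markIntensity μ ρ u₁ ≠ 0)
    (hu₂ : markIntensity μ ρ u₂ ≠ 0) :
    markPairCorrelation μ ρ g u₁ u₂ =
      ∫⁻ y₁, ∫⁻ y₂, (ρ (y₁, u₁) : ℝ≥0∞) / markIntensity μ ρ u₁ *
        ((ρ (y₂, u₂) : ℝ≥0∞) / markIntensity μ ρ u₂) * (g (y₁, u₁) (y₂, u₂) : ℝ≥0∞) ∂μ ∂μ := by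
  rw [markPairCorrelation, if_pos (pos_iff_ne_zero.mpr (mul_ne_zero hu₁ hu₂)),
    lintegral_lintegral_mul_mul_div _ _ _ hu₁ hu₂]

variable [MeasurableSpace U] {ν : Measure U}

/-- The intensity `∫ ρ(y,u) dν(u)` of the locations; this is `rho1` on general spaces. -/
def locationIntensity (ν : Measure U) (ρ : Y × U → ℝ≥0) (y : Y) : ℝ≥0∞ :=
  ∫⁻ u, (ρ (y, u) : ℝ≥0∞) ∂ν

/-- The expected number of points; this is `meanN` on general spaces. -/
def totalIntensity (μ : Measure Y) (ν : Measure U) (ρ : Y × U → ℝ≥0) : ℝ≥0∞ :=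
  ∫⁻ p, (ρ p : ℝ≥0∞) ∂(μ.prod ν)

/-- First order separability: the intensity is the product of its marginals divided by the expected
number of points, written without the division. -/
def FirstOrderSeparable (μ : Measure Y) (ν : Measure U) (ρ : Y × U → ℝ≥0) : Prop :=
  ∀ y u, (ρ (y, u) : ℝ≥0∞) * totalIntensity μ ν ρ = locationIntensity ν ρ y * markIntensity μ ρ u

lemma FirstOrderSeparable.div_markIntensity (hsep : FirstOrderSeparable μ ν ρ)
    (hpos : 0 < totalIntensity μ ν ρ) (hfin : totalIntensity μ ν ρ < ⊤) {u : U}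
    (hu : markIntensity μ ρ u ≠ 0) (y : Y) :
    (ρ (y, u) : ℝ≥0∞) / markIntensity μ ρ u =
      locationIntensity ν ρ y / totalIntensity μ ν ρ :=
  div_lintegral_eq_div_of_mul_eq_mul_lintegral (fun _ => ENNReal.coe_ne_top) hpos.ne' hfin.ne
    (fun y => hsep y u) hu y

lemma FirstOrderSeparable.markPairCorrelation_eq (hsep : FirstOrderSeparable μ ν ρ)
    (hpos : 0 < totalIntensity μ ν ρ) (hfin : totalIntensity μ ν ρ < ⊤)
    {u₁ u₂ : U} {κ : Y → Y → ℝ≥0}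
    (hκ : ∀ y₁ y₂, 0 < ρ (y₁, u₁) * ρ (y₂, u₂) → g (y₁, u₁) (y₂, u₂) = κ y₁ y₂)
    (hu : 0 < markIntensity μ ρ u₁ * markIntensity μ ρ u₂) :
    markPairCorrelation μ ρ g u₁ u₂ =
      ∫⁻ y₁, ∫⁻ y₂, locationIntensity ν ρ y₁ / totalIntensity μ ν ρ *
        (locationIntensity ν ρ y₂ / totalIntensity μ ν ρ) * (κ y₁ y₂ : ℝ≥0∞) ∂μ ∂μ := by
  obtain ⟨hu₁, hu₂⟩ := mul_ne_zero_iff.mp hu.ne'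
  rw [markPairCorrelation_eq_lintegral_div hu₁ hu₂]
  refine lintegral_congr fun y₁ => lintegral_congr fun y₂ => ?_
  rw [← hsep.div_markIntensity hpos hfin hu₁, ← hsep.div_markIntensity hpos hfin hu₂]
  rcases eq_zero_or_pos (ρ (y₁, u₁) * ρ (y₂, u₂)) with hzero | hρ_pos
  · rcases mul_eq_zero.mp hzero with h | h <;> simp [h]
  · rw [hκ y₁ y₂ hρ_pos]

theorem gfun2_formula_of_soirs_general (hsep : FirstOrderSeparable μ ν ρ)
    (hpos : 0 < totalIntensity μ ν ρ) (hfin : totalIntensity μ ν ρ < ⊤)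
    (δ : U → U → T) (κ : Y → Y → T → ℝ≥0)
    (hκ : ∀ y₁ y₂ u₁ u₂, 0 < ρ (y₁, u₁) * ρ (y₂, u₂) →
      g (y₁, u₁) (y₂, u₂) = κ y₁ y₂ (δ u₁ u₂)) :
    (∀ u₁ u₂, 0 < markIntensity μ ρ u₁ * markIntensity μ ρ u₂ →
        markPairCorrelation μ ρ g u₁ u₂ =
          ∫⁻ y₁, ∫⁻ y₂, locationIntensity ν ρ y₁ / totalIntensity μ ν ρ *
            (locationIntensity ν ρ y₂ / totalIntensity μ ν ρ) *
              (κ y₁ y₂ (δ u₁ u₂) : ℝ≥0∞) ∂μ ∂μ) ∧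
      (∀ u₁ u₂ u₁' u₂', 0 < markIntensity μ ρ u₁ * markIntensity μ ρ u₂ →
        0 < markIntensity μ ρ u₁' * markIntensity μ ρ u₂' → δ u₁ u₂ = δ u₁' u₂' →
          markPairCorrelation μ ρ g u₁ u₂ = markPairCorrelation μ ρ g u₁' u₂') := by
  have formula (u₁ u₂ : U) (hu : 0 < markIntensity μ ρ u₁ * markIntensity μ ρ u₂) :=
    hsep.markPairCorrelation_eq hpos hfin (fun y₁ y₂ => hκ y₁ y₂ u₁ u₂) hu
  refine ⟨formula, fun u₁ u₂ u₁' u₂' hu hu' hδ => ?_⟩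
  rw [formula u₁ u₂ hu, formula u₁' u₂' hu', hδ]

end MarkedIntensity

/-- Under first order separability and second order intensity-reweighted stationarity,
the pair correlation function of the spherical components is
`g₂(u₁,u₂) = ∫_W∫_W (ρ₁(y₁)/E(N))(ρ₁(y₂)/E(N)) g₀(y₁−y₂, d(u₁,u₂)) dy₁dy₂`;
in particular, where `ρ₂(u₁)ρ₂(u₂) > 0`, `g₂` depends only on `d(u₁,u₂)`. -/
theorem gfun2_formula_of_soirs (d k : ℕ) (hd : 1 ≤ d) (hk : 1 ≤ k)
    (W : Set (Eucl d)) (hWm : MeasurableSet W) (hWb : Bornology.IsBounded W)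
    (ρ : Eucl d × Sph k → ℝ≥0) (hρ : Measurable ρ)
    (hEN₀ : 0 < meanN W ρ) (hEN₁ : meanN W ρ < ⊤)
    (hsep1 : ∀ (y : Eucl d) (u : Sph k),
      (ρ (y, u) : ℝ≥0∞) * meanN W ρ = rho1 ρ y * rho2 W ρ u)
    (g : Eucl d × Sph k → Eucl d × Sph k → ℝ≥0)
    (hg : Measurable (Function.uncurry g))
    (hg0 : ∀ p q : Eucl d × Sph k, ρ p * ρ q = 0 → g p q = 0)
    (g₀ : Eucl d → ℝ → ℝ≥0) (hg₀ : Measurable (Function.uncurry g₀))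
    (hsoirs : ∀ (y₁ y₂ : Eucl d) (u₁ u₂ : Sph k), 0 < ρ (y₁, u₁) * ρ (y₂, u₂) →
      g (y₁, u₁) (y₂, u₂) = g₀ (y₁ - y₂) (gd u₁ u₂)) :
    (∀ u₁ u₂ : Sph k, 0 < rho2 W ρ u₁ * rho2 W ρ u₂ →
        gfun2 W ρ g u₁ u₂ =
          ∫⁻ y₁ in W, ∫⁻ y₂ in W, (rho1 ρ y₁ / meanN W ρ) * (rho1 ρ y₂ / meanN W ρ) *
            (g₀ (y₁ - y₂) (gd u₁ u₂) : ℝ≥0∞)) ∧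
      (∀ u₁ u₂ u₁' u₂' : Sph k, 0 < rho2 W ρ u₁ * rho2 W ρ u₂ →
        0 < rho2 W ρ u₁' * rho2 W ρ u₂' → gd u₁ u₂ = gd u₁' u₂' →
          gfun2 W ρ g u₁ u₂ = gfun2 W ρ g u₁' u₂') :=
  gfun2_formula_of_soirs_general (μ := volume.restrict W) (ν := sphMeasure k) hsep1 hEN₀ hEN₁
    gd (fun y₁ y₂ => g₀ (y₁ - y₂)) hsoirs
end
end
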